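/- Let q, α, β, γ ∈ ℂ with q ≠ 0, q^i ≠ 1 for all integers i ≥ 1, α ≠ 0, β ≠ 0, γ ≠ 0, αβ ≠ q^i for all integers i, and γ ≠ q^i for all integers i. Then for all nonnegative integers X, Y, Z: (α;q)_X (β;q)_Y (q/γ;q)_Z (γ;q)_{X+Y−Z} / ((q;q)_X (q;q)_Y (q;q)_Z (αβ;q)_{X+Y−Z}) = ∑ q^{kn−in+m} · α^k β^{k−i−m} γ^{−k} · (β;q)_n (γ;q)_n (γq^n;q)_i (βq^n;q)_j (q^{1−n}/(αβ);q)_k (α/γ;q)_l (q^{−n};q)_m / ((αβ;q)_n (q;q)_n (q;q)_i (q;q)_j (q;q)_k (q;q)_l (q;q)_m), where the (finite) sum ranges over all nonnegative integers i, j, k, l, m, n satisfying i+l+m = X, j+n−m = Y and j+k+l = Z. (This is the equality of coefficients of x^X y^Y z^Z in a second formal q-analogue of the Gelfand–Graev–Retakh identity.) -/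

import Mathlib

open Finset

/-- The `q`-shifted factorial `(a;q)_n` for an arbitrary integer `n`. -/
noncomputable def qpoch (q a : ℂ) (n : ℤ) : ℂ :=
  if 0 ≤ n then ∏ i ∈ Finset.range n.toNat, (1 - a * q ^ (i : ℤ))
  else (∏ i ∈ Finset.range (-n).toNat, (1 - a * q ^ (n + (i : ℤ))))⁻¹

/-- natural-index version of the shifted factorial -/
noncomputable def PP (q a : ℂ) (n : ℕ) : ℂ := ∏ i ∈ Finset.range n, (1 - a * q ^ i)

/-- reciprocal of `(q;q)_n`, zero for negative `n` -/
noncomputable def rq (q : ℂ) (n : ℤ) : ℂ := if n < 0 then 0 else (PP q q n.toNat)⁻¹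

/-- `(-1)^m q^(m choose 2)` -/
noncomputable def EE (q : ℂ) (m : ℕ) : ℂ := ∏ i ∈ Finset.range m, (-q ^ i)

lemma PP_zero (q a : ℂ) : PP q a 0 = 1 := by simp [PP]
lemma EE_zero (q : ℂ) : EE q 0 = 1 := by simp [EE]
lemma PP_succ (q a : ℂ) (n : ℕ) : PP q a (n+1) = PP q a n * (1 - a * q ^ n) := by
  simp [PP, Finset.prod_range_succ]
lemma EE_succ (q : ℂ) (n : ℕ) : EE q (n+1) = EE q n * (- q ^ n) := by
  simp [EE, Finset.prod_range_succ]
lemma PP_succ' (q a : ℂ) (n : ℕ) : PP q a (n+1) = (1 - a) * PP q (a * q) n := by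
  simp only [PP, Finset.prod_range_succ']
  rw [mul_comm]; congr 1
  · simp
  · apply Finset.prod_congr rfl; intros; ring
lemma PP_add (q a : ℂ) (n m : ℕ) : PP q a (n+m) = PP q a n * PP q (a * q ^ n) m := by
  simp only [PP, Finset.prod_range_add]
  congr 1
  apply Finset.prod_congr rfl; intros; ring

lemma PP_ne (q : ℂ) (hq1 : ∀ i : ℕ, 1 ≤ i → q ^ i ≠ 1) (n : ℕ) : PP q q n ≠ 0 := by
  rw [PP, Finset.prod_ne_zero_iff]
  intro i _ h
  apply hq1 (i+1) (by omega)
  rw [pow_succ]; linear_combination -h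

lemma qpoch_nat (q a : ℂ) (n : ℕ) : qpoch q a (n : ℤ) = PP q a n := by
  simp [qpoch, PP]

lemma rq_neg (q : ℂ) (n : ℤ) (h : n < 0) : rq q n = 0 := by simp [rq, h]
lemma rq_nat (q : ℂ) (n : ℕ) : rq q n = (PP q q n)⁻¹ := by simp [rq]

lemma rq_succ (q : ℂ) (hq1 : ∀ i : ℕ, 1 ≤ i → q ^ i ≠ 1) (n : ℤ) :
    rq q n = (1 - q ^ (n+1)) * rq q (n+1) := by
  rcases lt_trichotomy n (-1) with h | h | h
  · rw [rq_neg _ _ (by omega), rq_neg _ _ (by omega)]; simp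
  · subst h; rw [rq_neg _ _ (by omega)]; simp
  · obtain ⟨m, rfl⟩ := Int.eq_ofNat_of_zero_le (show 0 ≤ n by omega)
    have h1 := PP_ne q hq1 m
    have h2 := PP_ne q hq1 (m+1)
    have : rq q ((m:ℤ)+1) = (PP q q (m+1))⁻¹ := by rw [← rq_nat]; push_cast; rfl
    have h4 : (m:ℤ)+1 = ((m+1:ℕ):ℤ) := by push_cast; rfl
    rw [rq_nat, this, h4, zpow_natCast]
    rw [PP_succ] at h2 ⊢
    have h3 : 1 - q * q ^ m ≠ 0 := right_ne_zero_of_mul h2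
    rw [pow_succ, mul_comm (q^m) q]
    field_simp

lemma rq_pred (q : ℂ) (hq1 : ∀ i : ℕ, 1 ≤ i → q ^ i ≠ 1) (n : ℤ) :
    rq q (n-1) = (1 - q ^ n) * rq q n := by
  have := rq_succ q hq1 (n-1); simpa using this

lemma rq_succ_nat (q : ℂ) (hq1 : ∀ i : ℕ, 1 ≤ i → q ^ i ≠ 1) (n : ℕ) :
    rq q n = (1 - q * q ^ n) * rq q ((n+1 : ℕ) : ℤ) := by
  have := rq_succ q hq1 n
  rw [this, ← zpow_natCast q n]
  have h : q ^ ((n:ℤ)+1) = q * q ^ n := by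
    rw [show (n:ℤ)+1 = ((n+1:ℕ):ℤ) by push_cast; rfl, zpow_natCast, pow_succ, mul_comm]
  rw [h]; push_cast; simp

lemma qpoch_succ (q A : ℂ) (hA : ∀ i : ℤ, A ≠ q ^ i) (hq : q ≠ 0) (n : ℤ) :
    qpoch q A (n+1) = qpoch q A n * (1 - A * q ^ n) := by
  rcases lt_or_ge n 0 with h | h
  · obtain ⟨t, rfl⟩ : ∃ t : ℕ, n = -((t:ℤ)+1) := ⟨(-n-1).toNat, by omega⟩
    have hne : 1 - A * q ^ (-((t:ℤ)+1)) ≠ 0 := by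
      intro h0
      apply hA ((t:ℤ)+1)
      have : q ^ ((t:ℤ)+1) ≠ 0 := zpow_ne_zero _ hq
      rw [zpow_neg] at h0; field_simp at h0; linear_combination -h0
    have h1 : qpoch q A (-((t:ℤ)+1)) = (∏ i ∈ Finset.range (t+1), (1 - A * q ^ (-((t:ℤ)+1) + (i:ℤ))))⁻¹ := by
      rw [qpoch, if_neg (by omega)]
      congr 2
      all_goals congr 1
    have h2 : qpoch q A (-((t:ℤ)+1)+1) = (∏ i ∈ Finset.range t, (1 - A * q ^ (-(t:ℤ) + (i:ℤ))))⁻¹ := by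
      rcases Nat.eq_zero_or_pos t with rfl | ht
      · simp [qpoch]
      rw [qpoch, if_neg (by omega)]
      rw [show (-(-((t:ℤ)+1)+1)).toNat = t by omega, show (-((t:ℤ)+1)+1) = -(t:ℤ) by ring]
    rw [h1, h2, Finset.prod_range_succ', mul_inv, mul_assoc]
    simp only [Nat.cast_zero, add_zero]
    rw [inv_mul_cancel₀ hne, mul_one]
    congr 1
    apply Finset.prod_congr rfl; intro i _
    push_cast
    rw [show -((t:ℤ)+1) + ((i:ℤ)+1) = -(t:ℤ) + i by ring]
  · obtain ⟨m, rfl⟩ := Int.eq_ofNat_of_zero_le h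
    have : (m:ℤ)+1 = ((m+1:ℕ):ℤ) := by push_cast; rfl
    rw [this, qpoch_nat, qpoch_nat, PP_succ, zpow_natCast]

lemma qpoch_add (q A : ℂ) (hA : ∀ i : ℤ, A ≠ q ^ i) (hq : q ≠ 0) (n : ℤ) (m : ℕ) :
    qpoch q A (n+m) = qpoch q A n * PP q (A * q ^ n) m := by
  induction m with
  | zero => simp [PP_zero]
  | succ m ih =>
    rw [PP_succ, ← mul_assoc, ← ih]; push_cast
    rw [← add_assoc, qpoch_succ q A hA hq, zpow_add₀ hq, zpow_natCast]; ring

lemma qpoch_ne (q A : ℂ) (hA : ∀ i : ℤ, A ≠ q ^ i) (hq : q ≠ 0) (n : ℤ) : qpoch q A n ≠ 0 := by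
  have key : ∀ i : ℤ, 1 - A * q ^ i ≠ 0 := by
    intro i h0
    apply hA (-i)
    have : q ^ i ≠ 0 := zpow_ne_zero _ hq
    rw [zpow_neg]; field_simp; linear_combination -h0
  unfold qpoch
  split_ifs
  · rw [Finset.prod_ne_zero_iff]; intros; apply key
  · apply inv_ne_zero; rw [Finset.prod_ne_zero_iff]; intros; apply key

/-- abstract WZ telescoping -/
lemma wz_tele (f h G : ℕ → ℂ) (n : ℕ) (u v : ℂ) (h0 : G 0 = 0) (h1 : G (n+2) = 0)
    (hh : h (n+1) = 0)
    (H : ∀ l ≤ n+1, f l * u - v * h l = G (l+1) - G l) :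
    (∑ l ∈ range (n+2), f l) * u = v * ∑ l ∈ range (n+1), h l := by
  have e := Finset.sum_range_sub G (n+2)
  rw [h0, h1, ← Finset.sum_congr rfl (fun l hl => H l (by simp at hl; omega)),
    Finset.sum_sub_distrib, ← Finset.sum_mul, ← Finset.mul_sum, Finset.sum_range_succ h (n+1), hh] at e
  linear_combination e

/-- q-Chu-Vandermonde, second form -/
lemma V2 (q b c : ℂ) (hq1 : ∀ i : ℕ, 1 ≤ i → q ^ i ≠ 1) (hq : q ≠ 0) (hb : b ≠ 0) (R : ℕ) :
    ∑ k ∈ range (R+1), EE q k * c ^ k * b ^ (R-k) * PP q b k * PP q (c * q ^ k) (R-k) *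
      rq q ((R:ℤ)-k) * rq q k = (∏ s ∈ range R, (b - c * q ^ s)) * rq q R := by
  induction R with
  | zero => simp [EE_zero, PP_zero, rq, PP]
  | succ R ih =>
    have hne : 1 - q * q ^ R ≠ 0 := by
      intro h; apply hq1 (R+1) (by omega); rw [pow_succ]; linear_combination -h
    have key := wz_tele
      (fun k => EE q k * c ^ k * b ^ (R+1-k) * PP q b k * PP q (c * q ^ k) (R+1-k) *
        rq q (((R+1:ℕ):ℤ)-k) * rq q k)
      (fun k => EE q k * c ^ k * b ^ (R-k) * PP q b k * PP q (c * q ^ k) (R-k) *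
        rq q ((R:ℤ)-k) * rq q k)
      (fun k => - (EE q k * c ^ k * b ^ (R+1-k) * PP q b k * PP q (c * q ^ ((k:ℤ)-1)) (R+1-k) *
        rq q ((R:ℤ)+1-k) * rq q ((k:ℤ)-1)) * q ^ ((R:ℤ)+1-k)) R (1 - q * q ^ R) (b - c * q ^ R)
      (by simp [rq_neg]) (by simp [rq_neg]) (by simp [rq_neg]) ?_
    · rw [ih] at key
      apply mul_right_cancel₀ hne
      rw [key, Finset.prod_range_succ, rq_succ_nat q hq1 R]; ring
    · intro k hk
      rcases Nat.lt_or_ge R k with h | h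
      · obtain rfl : k = R+1 := by omega
        simp only [Nat.cast_add, Nat.cast_one]
        have e1 : (R:ℤ) - (R+1) = -1 := by ring
        have e2 : (R:ℤ) + 1 - (R+1) = 0 := by ring
        have e3 : (R:ℤ) + 1 - (R+1+1) = -1 := by ring
        rw [e1, e2, e3, rq_neg q (-1) (by omega), rq_pred q hq1 ((R:ℤ)+1)]
        have e4 : q ^ ((R:ℤ)+1) = q * q ^ R := by rw [zpow_add₀ hq]; simp [mul_comm]
        simp only [Nat.sub_self, PP_zero, show R - (R+1) = 0 by omega, e4]
        simp
        ring
      · obtain ⟨i, rfl⟩ := Nat.exists_eq_add_of_le h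
        have e1 : ((k+i:ℕ):ℤ) - k = (i:ℕ) := by push_cast; ring
        have e2 : ((k+i+1:ℕ):ℤ) - k = ((i+1:ℕ):ℤ) := by push_cast; ring
        have e3 : ((k+i:ℕ):ℤ) + 1 - k = ((i+1:ℕ):ℤ) := by push_cast; ring
        have e4 : ((k+i:ℕ):ℤ) + 1 - (k+1:ℕ) = (i:ℕ) := by push_cast; ring
        have e5 : ((k+1:ℕ):ℤ) - 1 = (k:ℕ) := by push_cast; ring
        have n1 : k+i+1-k = i+1 := by omega
        have n2 : k+i-k = i := by omega
        have n3 : k+i+1-(k+1) = i := by omega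
        simp only [e1, e2, e3, e4, e5, n1, n2, n3]
        rw [rq_pred q hq1, rq_succ_nat q hq1 i, PP_succ' q (c * q ^ ((k:ℤ)-1)),
          PP_succ q (c * q ^ k), PP_succ q b, EE_succ]
        have e6 : c * q ^ ((k:ℤ)-1) * q = c * q ^ k := by
          rw [zpow_sub₀ hq]; simp; field_simp
        rw [e6, zpow_sub₀ hq]
        simp only [zpow_natCast, zpow_one]
        rw [pow_add q k i, pow_succ b, pow_succ c, pow_succ q i]
        generalize rq q ((i+1:ℕ):ℤ) = r1
        generalize PP q (c * q^k) i = p1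
        field_simp
        ring

/-- q-Chu-Vandermonde, first form -/
lemma V1 (q b c : ℂ) (hq1 : ∀ i : ℕ, 1 ≤ i → q ^ i ≠ 1) (hq : q ≠ 0) (M : ℕ) :
    ∑ m ∈ range (M+1), EE q m * q ^ ((m:ℤ) - m * M) * PP q b m * PP q (c * q ^ m) (M-m) *
      rq q ((M:ℤ)-m) * rq q m = (∏ s ∈ range M, (b - c * q ^ s)) * rq q M := by
  induction M with
  | zero => simp [EE_zero, PP_zero, rq, PP]
  | succ R ih =>
    have hne : 1 - q * q ^ R ≠ 0 := by
      intro h; apply hq1 (R+1) (by omega); rw [pow_succ]; linear_combination -h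
    have key := wz_tele
      (fun m => EE q m * q ^ ((m:ℤ) - m * (R+1:ℕ)) * PP q b m * PP q (c * q ^ m) (R+1-m) *
        rq q (((R+1:ℕ):ℤ)-m) * rq q m)
      (fun m => EE q m * q ^ ((m:ℤ) - m * R) * PP q b m * PP q (c * q ^ m) (R-m) *
        rq q ((R:ℤ)-m) * rq q m)
      (fun k => - (EE q k * q ^ ((k:ℤ) - k * R) * PP q b k * PP q (c * q ^ ((k:ℤ)-1)) (R+1-k) *
        rq q ((R:ℤ)+1-k) * rq q ((k:ℤ)-1)) * q ^ ((R:ℤ)+1-2*k)) R (1 - q * q ^ R) (b - c * q ^ R)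
      (by simp [rq_neg]) (by simp [rq_neg]) (by simp [rq_neg]) ?_
    · rw [ih] at key
      apply mul_right_cancel₀ hne
      rw [key, Finset.prod_range_succ, rq_succ_nat q hq1 R]; ring
    · intro k hk
      rcases Nat.lt_or_ge R k with h | h
      · obtain rfl : k = R+1 := by omega
        simp only [Nat.cast_add, Nat.cast_one]
        have e1 : (R:ℤ) - (R+1) = -1 := by ring
        have e2 : (R:ℤ) + 1 - (R+1) = 0 := by ring
        have e3 : (R:ℤ) + 1 - (R+1+1) = -1 := by ring
        rw [e1, e2, e3, rq_neg q (-1) (by omega), rq_pred q hq1 ((R:ℤ)+1)]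
        have e4 : q ^ ((R:ℤ)+1) = q * q ^ R := by rw [zpow_add₀ hq]; simp [mul_comm]
        have e7 : ((R:ℤ) + 1 - (R+1)*(R+1)) = ((R:ℤ)+1 - (R+1)*R) + ((R:ℤ)+1 - 2*(R+1)) := by ring
        rw [e7, zpow_add₀ hq]
        simp only [Nat.sub_self, PP_zero, show R - (R+1) = 0 by omega, e4]
        simp
        ring
      · obtain ⟨i, rfl⟩ := Nat.exists_eq_add_of_le h
        have e1 : ((k+i:ℕ):ℤ) - k = (i:ℕ) := by push_cast; ring
        have e2 : ((k+i+1:ℕ):ℤ) - k = ((i+1:ℕ):ℤ) := by push_cast; ring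
        have e3 : ((k+i:ℕ):ℤ) + 1 - k = ((i+1:ℕ):ℤ) := by push_cast; ring
        have e4 : ((k+i:ℕ):ℤ) + 1 - (k+1:ℕ) = (i:ℕ) := by push_cast; ring
        have e5 : ((k+1:ℕ):ℤ) - 1 = (k:ℕ) := by push_cast; ring
        have n1 : k+i+1-k = i+1 := by omega
        have n2 : k+i-k = i := by omega
        have n3 : k+i+1-(k+1) = i := by omega
        have z1 : (k:ℤ) - k * (k+i+1:ℕ) = ((k:ℤ) - k * (k+i:ℕ)) - (k:ℕ) := by push_cast; ring
        have z2 : ((k+1:ℕ):ℤ) - (k+1:ℕ) * (k+i:ℕ) = ((k:ℤ) - k * (k+i:ℕ)) + 1 - (k:ℕ) - (i:ℕ) := by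
          push_cast; ring
        have z3 : ((k+i:ℕ):ℤ) + 1 - 2 * (k+1:ℕ) = (i:ℕ) - (k:ℕ) - 1 := by push_cast; ring
        have z4 : ((k+i:ℕ):ℤ) + 1 - 2 * (k:ℕ) = (i:ℕ) - (k:ℕ) + 1 := by push_cast; ring
        simp only [e1, e2, e3, e4, e5, n1, n2, n3, z1, z2, z3, z4]
        generalize ((k:ℤ) - k * (k+i:ℕ)) = W
        rw [rq_pred q hq1, rq_succ_nat q hq1 i, PP_succ' q (c * q ^ ((k:ℤ)-1)),
          PP_succ q (c * q ^ k), PP_succ q b, EE_succ]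
        have e6 : c * q ^ ((k:ℤ)-1) * q = c * q ^ k := by
          rw [zpow_sub₀ hq]; simp; field_simp
        rw [e6]
        simp only [zpow_sub₀ hq, zpow_add₀ hq]
        simp only [zpow_natCast, zpow_one]
        rw [pow_add q k i]
        generalize rq q ((i+1:ℕ):ℤ) = r1
        generalize PP q (c * q^k) i = p1
        generalize q ^ W = w
        field_simp
        ring

/-- q-Saalschuetz -/
lemma SS (q a g : ℂ) (hq1 : ∀ i : ℕ, 1 ≤ i → q ^ i ≠ 1) (hq : q ≠ 0) (X Z : ℕ) :
    ∑ l ∈ range (X+1), PP q (a * g) l * PP q (a * q ^ ((l:ℤ) - Z)) (X-l) *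
      PP q (g * q ^ (1 + (l:ℤ) - X)) (Z-l) * q ^ (((Z:ℤ)-l)*((X:ℤ)-l)) *
      rq q l * rq q ((X:ℤ)-l) * rq q ((Z:ℤ)-l) = PP q a X * PP q (q * g) Z * rq q X * rq q Z := by
  induction X with
  | zero => simp [PP_zero, rq_nat]; left; left; congr 1; ring
  | succ R ih =>
    have hne : 1 - q * q ^ R ≠ 0 := by
      intro h; apply hq1 (R+1) (by omega); rw [pow_succ]; linear_combination -h
    have key := wz_tele
      (fun l => PP q (a * g) l * PP q (a * q ^ ((l:ℤ) - Z)) (R+1-l) *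
        PP q (g * q ^ (1 + (l:ℤ) - (R+1:ℕ))) (Z-l) * q ^ (((Z:ℤ)-l)*(((R+1:ℕ):ℤ)-l)) *
        rq q l * rq q (((R+1:ℕ):ℤ)-l) * rq q ((Z:ℤ)-l))
      (fun l => PP q (a * g) l * PP q (a * q ^ ((l:ℤ) - Z)) (R-l) *
        PP q (g * q ^ (1 + (l:ℤ) - R)) (Z-l) * q ^ (((Z:ℤ)-l)*((R:ℤ)-l)) *
        rq q l * rq q ((R:ℤ)-l) * rq q ((Z:ℤ)-l))
      (fun l => - (PP q (a * g) l * PP q (a * q ^ ((l:ℤ) - 1 - Z)) (R+1-l) *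
        PP q (g * q ^ ((l:ℤ) - R)) (Z-l) * q ^ (((Z:ℤ)-l+1)*((R:ℤ)-l+1)) *
        rq q ((l:ℤ)-1) * rq q ((R:ℤ)+1-l) * rq q ((Z:ℤ)-l)))
      R (1 - q * q ^ R) (1 - a * q ^ R)
      (by simp [rq_neg]) (by simp [rq_neg]) (by simp [rq_neg]) ?_
    · rw [ih] at key
      apply mul_right_cancel₀ hne
      rw [key, PP_succ, rq_succ_nat q hq1 R]; ring
    · intro l hl
      rcases Nat.lt_or_ge Z l with hZ | hZ
      · have x1 : rq q ((Z:ℤ)-l) = 0 := rq_neg _ _ (by omega)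
        have x2 : rq q ((Z:ℤ)-((l:ℤ)+1)) = 0 := rq_neg _ _ (by omega)
        simp [x1, x2]
      obtain ⟨w, rfl⟩ := Nat.exists_eq_add_of_le hZ
      rcases Nat.lt_or_ge R l with h | h
      · obtain rfl : l = R+1 := by omega
        simp only [Nat.cast_add, Nat.cast_one]
        have e1 : (R:ℤ) - (R+1) = -1 := by ring
        have e2 : (R:ℤ) + 1 - (R+1) = 0 := by ring
        have e3 : (R:ℤ) + 1 - (R+1+1) = -1 := by ring
        have e5 : 1 + ((R:ℤ) + 1) - (R+1) = 1 := by ring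
        have e6 : (R:ℤ) + 1 - R = 1 := by ring
        rw [e1, e2, e3, e5, e6, rq_neg q (-1) (by omega), rq_pred q hq1 ((R:ℤ)+1)]
        have e4 : q ^ ((R:ℤ)+1) = q * q ^ R := by rw [zpow_add₀ hq]; simp [mul_comm]
        simp only [Nat.sub_self, PP_zero, show R - (R+1) = 0 by omega, e4]
        simp
        ring
      · obtain ⟨i, rfl⟩ := Nat.exists_eq_add_of_le h
        have e1 : ((l+i:ℕ):ℤ) - l = (i:ℕ) := by push_cast; ring
        have e2 : ((l+i+1:ℕ):ℤ) - l = ((i+1:ℕ):ℤ) := by push_cast; ring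
        have e3 : ((l+i:ℕ):ℤ) + 1 - l = ((i+1:ℕ):ℤ) := by push_cast; ring
        have e4 : ((l+i:ℕ):ℤ) + 1 - (l+1:ℕ) = (i:ℕ) := by push_cast; ring
        have e5 : ((l+1:ℕ):ℤ) - 1 = (l:ℕ) := by push_cast; ring
        have e7 : ((l+w:ℕ):ℤ) - l = (w:ℕ) := by push_cast; ring
        have e8 : ((l+w:ℕ):ℤ) - (l+1:ℕ) = (w:ℤ) - 1 := by push_cast; ring
        have e9 : (l:ℤ) - ((l+w:ℕ):ℤ) = -(w:ℤ) := by push_cast; ring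
        have e10 : (l:ℤ) - 1 - ((l+w:ℕ):ℤ) = -(w:ℤ) - 1 := by push_cast; ring
        have e11 : 1 + (l:ℤ) - ((l+i+1:ℕ):ℤ) = -(i:ℤ) := by push_cast; ring
        have e12 : 1 + (l:ℤ) - ((l+i:ℕ):ℤ) = 1-(i:ℤ) := by push_cast; ring
        have e13 : ((l+1:ℕ):ℤ) - ((l+i:ℕ):ℤ) = 1-(i:ℤ) := by push_cast; ring
        have e14 : (l:ℤ) - ((l+i:ℕ):ℤ) = -(i:ℤ) := by push_cast; ring
        have e15 : ((l+i:ℕ):ℤ) - ((l+1:ℕ):ℤ) = (i:ℤ)-1 := by push_cast; ring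
        have n1 : l+i+1-l = i+1 := by omega
        have n2 : l+i-l = i := by omega
        have n3 : l+i+1-(l+1) = i := by omega
        have n4 : l+w-l = w := by omega
        have n5 : l+w-(l+1) = w-1 := by omega
        simp only [e1, e2, e3, e4, e5, e7, e8, e9, e10, e11, e12, e13, e14, e15, n1, n2, n3, n4, n5]
        have z1 : (w:ℤ) * ((i+1:ℕ):ℤ) = ((w*i:ℕ):ℤ) + w := by push_cast; ring
        have z2 : (w:ℤ) * i = ((w*i:ℕ):ℤ) := by push_cast; ring
        have z3 : ((w:ℤ) - 1 + 1) * ((i:ℤ)-1+1) = ((w*i:ℕ):ℤ) := by push_cast; ring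
        have z4 : ((w:ℤ) + 1) * ((i:ℤ)+1) = ((w*i:ℕ):ℤ) + w + i + 1 := by push_cast; ring
        rw [z1, z2, z3, z4]
        rw [rq_pred q hq1, rq_pred q hq1, rq_succ_nat q hq1 i, PP_succ' q (a * q ^ (-(w:ℤ)-1)),
          PP_succ q (a * q ^ (-(w:ℤ))), PP_succ q (a*g)]
        have e6 : a * q ^ (-(w:ℤ)-1) * q = a * q ^ (-(w:ℤ)) := by
          rw [zpow_sub₀ hq]; simp; field_simp
        rw [e6]
        generalize rq q ((i+1:ℕ):ℤ) = r1
        generalize PP q (a * q ^ (-(w:ℤ))) i = p1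
        rcases w with _ | w
        · simp only [PP_zero, Nat.cast_zero]
          simp only [zpow_sub₀ hq, zpow_add₀ hq, zpow_neg, zpow_natCast, zpow_one, zpow_zero]
          rw [pow_add q l i]
          field_simp
          ring
        · rw [PP_succ' q (g * q ^ (-(i:ℤ))), PP_succ q (g * q ^ (1-(i:ℤ)))]
          have e6 : g * q ^ (-(i:ℤ)) * q = g * q ^ (1-(i:ℤ)) := by
            rw [sub_eq_add_neg, zpow_add₀ hq]; simp; ring
          rw [e6, Nat.add_sub_cancel]
          generalize PP q (g * q ^ (1-(i:ℤ))) w = p2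
          simp only [zpow_sub₀ hq, zpow_add₀ hq, zpow_neg, zpow_natCast, zpow_one, zpow_zero]
          rw [pow_add q l i, pow_succ q w]
          field_simp
          ring

lemma L1 (q A : ℂ) (hA0 : A ≠ 0) (hA : ∀ i : ℤ, A ≠ q ^ i) (hq : q ≠ 0) (n k : ℕ) :
    PP q (q ^ (1 - (n:ℤ)) / A) k * qpoch q A ((n:ℤ) - k) =
      EE q k * (q ^ (1 - (n:ℤ)) / A) ^ k * qpoch q A n := by
  induction k with
  | zero => simp [PP_zero, EE_zero]
  | succ k ih =>
    have h := qpoch_succ q A hA hq ((n:ℤ) - k - 1)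
    rw [sub_add_cancel] at h
    rw [PP_succ, EE_succ, pow_succ]
    push_cast
    rw [← sub_sub]
    have e : (1 - q ^ (1 - (n:ℤ)) / A * q ^ k) =
        - q ^ k * (q ^ (1 - (n:ℤ)) / A) * (1 - A * q ^ ((n:ℤ) - k - 1)) := by
      simp only [zpow_sub₀ hq, zpow_natCast, zpow_one]
      field_simp
      ring
    rw [e]
    rw [h] at ih
    linear_combination (- q ^ k * (q ^ (1 - (n:ℤ)) / A)) * ih

lemma L2 (q : ℂ) (hq1 : ∀ i : ℕ, 1 ≤ i → q ^ i ≠ 1) (hq : q ≠ 0) (n m : ℕ) :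
    PP q (q ^ (-(n:ℤ))) m * rq q n = EE q m * (q ^ (-(n:ℤ))) ^ m * rq q ((n:ℤ) - m) := by
  induction m with
  | zero => simp [PP_zero, EE_zero]
  | succ m ih =>
    rw [PP_succ, EE_succ, pow_succ]
    push_cast
    rw [← sub_sub, rq_pred q hq1]
    have e : (1 - q ^ (-(n:ℤ)) * q ^ m) =
        - q ^ m * (q ^ (-(n:ℤ))) * (1 - q ^ ((n:ℤ) - m)) := by
      simp only [zpow_sub₀ hq, zpow_natCast, zpow_neg]
      field_simp
      ring
    rw [e]
    linear_combination (- q ^ m * (q ^ (-(n:ℤ))) * (1 - q ^ ((n:ℤ) - m))) * ih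

lemma L3 (q : ℂ) (hq1 : ∀ i : ℕ, 1 ≤ i → q ^ i ≠ 1) (hq : q ≠ 0) (Y j : ℕ) :
    rq q ((Y:ℤ) - j) = PP q (q ^ ((Y:ℤ) - j + 1)) j * rq q Y := by
  induction j with
  | zero => simp [PP_zero]
  | succ j ih =>
    push_cast
    rw [← sub_sub, rq_pred q hq1, ih, sub_add_cancel, PP_succ', zpow_add_one₀ hq]
    ring

/-- the summand -/
noncomputable def TT (q α β γ : ℂ) (i j k l m n : ℕ) : ℂ :=
          q ^ ((k : ℤ) * n - (i : ℤ) * n + (m : ℤ)) *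
            α ^ (k : ℤ) * β ^ ((k : ℤ) - (i : ℤ) - (m : ℤ)) * γ ^ (-(k : ℤ)) *
            (qpoch q β (n : ℤ) * qpoch q γ (n : ℤ) * qpoch q (γ * q ^ (n : ℤ)) (i : ℤ) *
              qpoch q (β * q ^ (n : ℤ)) (j : ℤ) *
              qpoch q (q ^ (1 - (n : ℤ)) / (α * β)) (k : ℤ) *
              qpoch q (α / γ) (l : ℤ) *
              qpoch q (q ^ (-(n : ℤ))) (m : ℤ)) /
            (qpoch q (α * β) (n : ℤ) * qpoch q q (n : ℤ) * qpoch q q (i : ℤ) *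
              qpoch q q (j : ℤ) * qpoch q q (k : ℤ) * qpoch q q (l : ℤ) *
              qpoch q q (m : ℤ))

lemma TT_eq (q α β γ : ℂ) (i j k l m n : ℕ) : TT q α β γ i j k l m n =
    q ^ ((k : ℤ) * n - (i : ℤ) * n + (m : ℤ)) *
            α ^ (k : ℤ) * β ^ ((k : ℤ) - (i : ℤ) - (m : ℤ)) * γ ^ (-(k : ℤ)) *
    (PP q β n * PP q (β * q ^ n) j) * (PP q γ n * PP q (γ * q ^ n) i) *
    (PP q (q ^ (1 - (n:ℤ)) / (α * β)) k / qpoch q (α * β) n) * PP q (α / γ) l *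
    (PP q (q ^ (-(n:ℤ))) m * rq q n) * rq q i * rq q j * rq q k * rq q l * rq q m := by
  unfold TT
  simp only [qpoch_nat, rq_nat, zpow_natCast, div_eq_mul_inv, mul_inv]
  ring

lemma TT_zero (q α β γ : ℂ) (hq1 : ∀ i : ℕ, 1 ≤ i → q ^ i ≠ 1) (hq : q ≠ 0)
    (i j k l m n : ℕ) (h : n < m) : TT q α β γ i j k l m n = 0 := by
  rw [TT_eq, L2 q hq1 hq, rq_neg q _ (by omega)]; simp

lemma TT_form (q α β γ : ℂ) (hq1 : ∀ i : ℕ, 1 ≤ i → q ^ i ≠ 1) (hq : q ≠ 0)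
    (hα : α ≠ 0) (hβ : β ≠ 0) (hγ : γ ≠ 0)
    (hαβ : ∀ i : ℤ, α * β ≠ q ^ i) (i j k l m p : ℕ) :
    TT q α β γ i j k l m (p + m) =
    (EE q m * q ^ ((m:ℤ) - m * (m+i:ℕ)) * PP q (β * q ^ (p+j)) m *
      PP q (α * β * q ^ ((p:ℤ) - k) * q ^ m) i * rq q i * rq q m) *
    (EE q k * q ^ ((k:ℤ) - p * (m+i:ℕ)) * (β ^ (m+i))⁻¹ * (γ ^ k)⁻¹ * PP q β (p+j) *
      PP q γ (p + (m+i)) * PP q (α / γ) l * rq q p * rq q j * rq q k * rq q l /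
      qpoch q (α * β) ((p:ℤ) + (m+i:ℕ) - k)) := by
  have hA0 := mul_ne_zero hα hβ
  rw [TT_eq, L2 q hq1 hq, ← PP_add, ← PP_add]
  have a1 : PP q β (p + m + j) = PP q β (p+j) * PP q (β * q ^ (p+j)) m := by
    rw [← PP_add]; congr 1; ring
  have a2 : p + m + i = p + (m + i) := by ring
  have a3 : PP q (q ^ (1 - ((p+m:ℕ):ℤ)) / (α * β)) k / qpoch q (α * β) (p+m:ℕ) =
      EE q k * (q ^ (1 - ((p+m:ℕ):ℤ)) / (α * β)) ^ k *
        PP q (α * β * q ^ ((p:ℤ) - k) * q ^ m) i / qpoch q (α * β) ((p:ℤ) + (m+i:ℕ) - k) := by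
    have h1 := L1 q (α * β) hA0 hαβ hq (p+m) k
    have h2 := qpoch_add q (α * β) hαβ hq (((p+m:ℕ):ℤ) - k) i
    have h3 : ((p+m:ℕ):ℤ) - k + i = (p:ℤ) + (m+i:ℕ) - k := by push_cast; ring
    have h4 : α * β * q ^ (((p+m:ℕ):ℤ) - k) = α * β * q ^ ((p:ℤ) - k) * q ^ m := by
      rw [mul_assoc (α * β), ← zpow_natCast q m, ← zpow_add₀ hq]; congr 2; push_cast; ring
    rw [h3, h4] at h2
    have n1 := qpoch_ne q (α * β) hαβ hq (p+m:ℕ)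
    have n2 := qpoch_ne q (α * β) hαβ hq (((p+m:ℕ):ℤ) - k)
    have n3 := qpoch_ne q (α * β) hαβ hq ((p:ℤ) + (m+i:ℕ) - k)
    rw [div_eq_div_iff n1 n3, h2]
    linear_combination PP q (α * β * q ^ ((p:ℤ) - k) * q ^ m) i * h1
  have a4 : ((p+m:ℕ):ℤ) - m = p := by push_cast; ring
  have a5 : q ^ ((k : ℤ) * (p+m:ℕ) - (i : ℤ) * (p+m:ℕ) + (m : ℤ)) *
            α ^ (k : ℤ) * β ^ ((k : ℤ) - (i : ℤ) - (m : ℤ)) * γ ^ (-(k : ℤ)) *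
        (q ^ (1 - ((p+m:ℕ):ℤ)) / (α * β)) ^ k * (q ^ (-((p+m:ℕ):ℤ))) ^ m =
      q ^ ((m:ℤ) - m * (m+i:ℕ)) * q ^ ((k:ℤ) - p * (m+i:ℕ)) * (β ^ (m+i))⁻¹ * (γ ^ k)⁻¹ := by
    have b1 : (q ^ (1 - ((p+m:ℕ):ℤ))) ^ k = q ^ ((1 - ((p+m:ℕ):ℤ)) * k) := by
      rw [zpow_mul, zpow_natCast]
    have b2 : (q ^ (-((p+m:ℕ):ℤ))) ^ m = q ^ (-((p+m:ℕ):ℤ) * m) := by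
      rw [zpow_mul, zpow_natCast]
    have b3 : q ^ ((k : ℤ) * (p+m:ℕ) - (i : ℤ) * (p+m:ℕ) + (m : ℤ)) * q ^ ((1 - ((p+m:ℕ):ℤ)) * k) *
        q ^ (-((p+m:ℕ):ℤ) * m) = q ^ ((m:ℤ) - m * (m+i:ℕ)) * q ^ ((k:ℤ) - p * (m+i:ℕ)) := by
      rw [← zpow_add₀ hq, ← zpow_add₀ hq, ← zpow_add₀ hq]; congr 1; push_cast; ring
    have b4 : β ^ ((k : ℤ) - (i : ℤ) - (m : ℤ)) = β ^ k * (β ^ (m+i))⁻¹ := by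
      rw [zpow_sub₀ hβ, zpow_sub₀ hβ, pow_add]; simp only [zpow_natCast]; field_simp
    rw [div_pow, mul_pow, b1, b2, b4, ← b3, zpow_neg]
    simp only [zpow_natCast]
    field_simp
  rw [a1, a2, a3, a4]
  linear_combination (EE q m * PP q (β * q ^ (p+j)) m *
      PP q (α * β * q ^ ((p:ℤ) - k) * q ^ m) i * rq q i * rq q m *
    (EE q k * PP q β (p+j) *
      PP q γ (p + (m+i)) * PP q (α / γ) l * rq q p * rq q j * rq q k * rq q l /
      qpoch q (α * β) ((p:ℤ) + (m+i:ℕ) - k))) * a5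

lemma prod_scale (q a b : ℂ) (ha : a ≠ 0) (M : ℕ) :
    ∏ s ∈ range M, (a - b * q ^ s) = a ^ M * PP q (b / a) M := by
  rw [PP, ← Finset.card_range M, ← Finset.prod_const, Finset.card_range, ← Finset.prod_mul_distrib]
  apply Finset.prod_congr rfl; intros; field_simp

lemma ggr_inner_sum (q α β γ : ℂ) (hq1 : ∀ i : ℕ, 1 ≤ i → q ^ i ≠ 1) (hq : q ≠ 0)
    (hα : α ≠ 0) (hβ : β ≠ 0) (hγ : γ ≠ 0)
    (hαβ : ∀ i : ℤ, α * β ≠ q ^ i) (hγq : ∀ i : ℤ, γ ≠ q ^ i) (j k l M Y R : ℕ) (N : ℤ)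
    (hR : R = j + k) (hN : N = (Y:ℤ) + M - R) :
    ∑ m ∈ range (M+1), (if j ≤ Y + m then TT q α β γ (M-m) j k l m (Y+m-j) else 0) =
    (rq q M * PP q (α * q ^ (-(R:ℤ))) M * PP q β Y * qpoch q γ N * PP q (α/γ) l * rq q l * rq q Y /
      qpoch q (α * β) N * (q ^ (R * M) * ((γ * q ^ N) ^ R)⁻¹)) *
    (EE q k * (q ^ ((Y:ℤ) - R + 1)) ^ k * (γ * q ^ N) ^ (R-k) * PP q (γ * q ^ N) k *
      PP q (q ^ ((Y:ℤ) - R + 1) * q ^ k) (R-k) * rq q ((R:ℤ)-k) * rq q k) := by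
  have f1 : R - k = j := by omega
  have f2 : (R:ℤ) - k = j := by omega
  have f3 : q ^ ((Y:ℤ) - R + 1) * q ^ k = q ^ ((Y:ℤ) - j + 1) := by
    rw [← zpow_natCast q k, ← zpow_add₀ hq]; congr 1; omega
  have f4 := L3 q hq1 hq Y j
  rw [f1, f2, f3]
  rcases Nat.lt_or_ge Y j with h | h
  · rw [rq_neg q _ (by omega)] at f4
    rw [Finset.sum_eq_zero]
    · linear_combination (rq q M * PP q (α * q ^ (-(R:ℤ))) M * PP q β Y * qpoch q γ N * PP q (α/γ) l * rq q l /
      qpoch q (α * β) N * (q ^ (R * M) * ((γ * q ^ N) ^ R)⁻¹)) *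
    (EE q k * (q ^ ((Y:ℤ) - R + 1)) ^ k * (γ * q ^ N) ^ j * PP q (γ * q ^ N) k *
       rq q j * rq q k) * f4
    · intro m _
      split_ifs with hh
      · exact TT_zero q α β γ hq1 hq _ _ _ _ _ _ (by omega)
      · rfl
  · obtain ⟨p, rfl⟩ := Nat.exists_eq_add_of_le' h
    have f5 : ((p+j:ℕ):ℤ) - j = p := by push_cast; ring
    rw [f5] at f4 ⊢
    have v1 := V1 q (β * q ^ (p+j)) (α * β * q ^ ((p:ℤ) - k)) hq1 hq M
    have hb : β * q ^ (p+j) ≠ 0 := mul_ne_zero hβ (pow_ne_zero _ hq)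
    have f6 : α * β * q ^ ((p:ℤ) - k) / (β * q ^ (p+j)) = α * q ^ (-(R:ℤ)) := by
      have : q ^ ((p:ℤ) - k) = q ^ (-(R:ℤ)) * q ^ (p+j) := by
        rw [← zpow_natCast q (p+j), ← zpow_add₀ hq]; congr 1; push_cast; omega
      rw [this]; field_simp
    rw [prod_scale q _ _ hb, f6] at v1
    have hNN : (p:ℤ) + M - k = N := by push_cast at hN; omega
    have hg : PP q γ (p + M) = qpoch q γ N * PP q (γ * q ^ N) k := by
      rw [← qpoch_add q γ hγq hq, ← qpoch_nat]; congr 1; push_cast; omega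
    have e : ∀ m ∈ range (M+1), (if j ≤ p + j + m then TT q α β γ (M-m) j k l m (p+j+m-j) else 0) =
      (EE q m * q ^ ((m:ℤ) - m * M) * PP q (β * q ^ (p+j)) m *
      PP q (α * β * q ^ ((p:ℤ) - k) * q ^ m) (M-m) * rq q ((M:ℤ)-m) * rq q m) *
      (EE q k * q ^ ((k:ℤ) - p * M) * (β ^ M)⁻¹ * (γ ^ k)⁻¹ * PP q β (p+j) *
      PP q γ (p + M) * PP q (α / γ) l * rq q p * rq q j * rq q k * rq q l /
      qpoch q (α * β) ((p:ℤ) + M - k)) := by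
      intro m hm
      obtain ⟨i, rfl⟩ := Nat.exists_eq_add_of_le (show m ≤ M by simp at hm; omega)
      rw [if_pos (by omega), show p + j + m - j = p + m by omega, show m + i - m = i by omega,
        TT_form q α β γ hq1 hq hα hβ hγ hαβ, show ((m+i:ℕ):ℤ) - m = i by push_cast; ring]
    rw [Finset.sum_congr rfl e, ← Finset.sum_mul, v1, hNN, hg, f4]
    have hpow : (β * q ^ (p+j)) ^ M * (q ^ ((k:ℤ) - p * M) * (β ^ M)⁻¹ * (γ ^ k)⁻¹) =
       (q ^ (R * M) * ((γ * q ^ N) ^ R)⁻¹) * ((q ^ (((p+j:ℕ):ℤ) - R + 1)) ^ k * (γ * q ^ N) ^ j) := by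
      have b0 : γ * q ^ N ≠ 0 := mul_ne_zero hγ (zpow_ne_zero _ hq)
      have b1 : ((γ * q ^ N) ^ R)⁻¹ * (γ * q ^ N) ^ j = (γ^k)⁻¹ * q ^ (-(N * k)) := by
        rw [zpow_neg, zpow_mul, zpow_natCast, ← mul_inv, ← mul_pow, hR, pow_add]; field_simp
      have b2 : (q ^ (p+j)) ^ M * q ^ ((k:ℤ) - p * M) =
          q ^ (R * M) * (q ^ (((p+j:ℕ):ℤ) - R + 1)) ^ k * q ^ (-(N * k)) := by
        rw [← pow_mul, ← zpow_natCast q ((p+j)*M), ← zpow_natCast q (R*M),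
          ← zpow_natCast (q ^ (((p+j:ℕ):ℤ) - R + 1)) k, ← zpow_mul, ← zpow_add₀ hq, ← zpow_add₀ hq,
          ← zpow_add₀ hq]
        congr 1; rw [hN, hR]; push_cast; ring
      have b3 : (β ^ M) * (β ^ M)⁻¹ = 1 := mul_inv_cancel₀ (pow_ne_zero _ hβ)
      rw [mul_pow]
      linear_combination (q ^ (p+j)) ^ M * q ^ ((k:ℤ) - p * M) * (γ ^ k)⁻¹ * b3 + (γ ^ k)⁻¹ * b2 -
        q ^ (R * M) * (q ^ (((p+j:ℕ):ℤ) - R + 1)) ^ k * b1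
    linear_combination (PP q (α * q ^ (-(R:ℤ))) M * rq q M * EE q k * PP q β (p+j) * qpoch q γ N *
      PP q (γ * q ^ N) k * PP q (α/γ) l * PP q (q ^ ((p:ℤ)+1)) j * rq q (p+j:ℕ) * rq q j * rq q k * rq q l /
      qpoch q (α * β) N) * hpow

lemma mid_sum (q α β γ : ℂ) (hq1 : ∀ i : ℕ, 1 ≤ i → q ^ i ≠ 1) (hq : q ≠ 0)
    (hα : α ≠ 0) (hβ : β ≠ 0) (hγ : γ ≠ 0)
    (hαβ : ∀ i : ℤ, α * β ≠ q ^ i) (hγq : ∀ i : ℤ, γ ≠ q ^ i) (l M Y R : ℕ) (N : ℤ)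
    (hN : N = (Y:ℤ) + M - R) :
    ∑ k ∈ range (R+1), ∑ m ∈ range (M+1),
      (if R - k ≤ Y + m then TT q α β γ (M-m) (R-k) k l m (Y+m-(R-k)) else 0) =
    rq q M * PP q (α * q ^ (-(R:ℤ))) M * PP q β Y * qpoch q γ N * PP q (α/γ) l * rq q l * rq q Y /
      qpoch q (α * β) N * q ^ (R * M) * PP q (γ⁻¹ * q ^ (1 - (M:ℤ))) R * rq q R := by
  rw [Finset.sum_congr rfl (fun k hk => ggr_inner_sum q α β γ hq1 hq hα hβ hγ hαβ hγq (R-k) k l M Y R N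
    (by simp at hk; omega) hN), ← Finset.mul_sum]
  have b0 : γ * q ^ N ≠ 0 := mul_ne_zero hγ (zpow_ne_zero _ hq)
  rw [V2 q _ _ hq1 hq b0, prod_scale q _ _ b0]
  have e : q ^ ((Y:ℤ) - R + 1) / (γ * q ^ N) = γ⁻¹ * q ^ (1 - (M:ℤ)) := by
    have : q ^ ((Y:ℤ) - R + 1) = q ^ (1 - (M:ℤ)) * q ^ N := by
      rw [← zpow_add₀ hq, hN]; congr 1; ring
    have h3 : q ^ N ≠ 0 := zpow_ne_zero _ hq
    rw [this]; field_simp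
  rw [e]
  have b1 : ((γ * q ^ N) ^ R)⁻¹ * (γ * q ^ N) ^ R = 1 := inv_mul_cancel₀ (pow_ne_zero _ b0)
  linear_combination (rq q M * PP q (α * q ^ (-(R:ℤ))) M * PP q β Y * qpoch q γ N * PP q (α/γ) l * rq q l * rq q Y /
      qpoch q (α * β) N * q ^ (R * M) * PP q (γ⁻¹ * q ^ (1 - (M:ℤ))) R * rq q R) * b1

lemma total_sum (q α β γ : ℂ) (hq1 : ∀ i : ℕ, 1 ≤ i → q ^ i ≠ 1) (hq : q ≠ 0)
    (hα : α ≠ 0) (hβ : β ≠ 0) (hγ : γ ≠ 0)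
    (hαβ : ∀ i : ℤ, α * β ≠ q ^ i) (hγq : ∀ i : ℤ, γ ≠ q ^ i) (X Y Z : ℕ) :
    ∑ l ∈ range (X+1), (if l ≤ Z then ∑ k ∈ range (Z-l+1), ∑ m ∈ range (X-l+1),
      (if Z-l-k ≤ Y + m then TT q α β γ (X-l-m) (Z-l-k) k l m (Y+m-(Z-l-k)) else 0) else 0) =
    PP q α X * PP q β Y * PP q (q/γ) Z * qpoch q γ ((X:ℤ)+Y-Z) /
      (PP q q X * PP q q Y * PP q q Z * qpoch q (α * β) ((X:ℤ)+Y-Z)) := by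
  have s := SS q α γ⁻¹ hq1 hq X Z
  have : ∀ l ∈ range (X+1), (if l ≤ Z then ∑ k ∈ range (Z-l+1), ∑ m ∈ range (X-l+1),
      (if Z-l-k ≤ Y + m then TT q α β γ (X-l-m) (Z-l-k) k l m (Y+m-(Z-l-k)) else 0) else 0) =
      (PP q β Y * rq q Y * qpoch q γ ((X:ℤ)+Y-Z) / qpoch q (α * β) ((X:ℤ)+Y-Z)) *
      (PP q (α * γ⁻¹) l * PP q (α * q ^ ((l:ℤ) - Z)) (X-l) *
      PP q (γ⁻¹ * q ^ (1 + (l:ℤ) - X)) (Z-l) * q ^ (((Z:ℤ)-l)*((X:ℤ)-l)) *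
      rq q l * rq q ((X:ℤ)-l) * rq q ((Z:ℤ)-l)) := by
    intro l hl
    have hlX : l ≤ X := by simp at hl; omega
    split_ifs with h
    · have c1 : ((Z-l:ℕ):ℤ) = (Z:ℤ) - l := by omega
      have c2 : ((X-l:ℕ):ℤ) = (X:ℤ) - l := by omega
      rw [mid_sum q α β γ hq1 hq hα hβ hγ hαβ hγq l (X-l) Y (Z-l) ((X:ℤ)+Y-Z) (by omega)]
      rw [← zpow_natCast q ((Z-l)*(X-l)), Nat.cast_mul, c1, c2, neg_sub,
        show 1 - ((X:ℤ) - l) = 1 + l - X by ring, div_eq_mul_inv α γ]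
      ring
    · rw [rq_neg q ((Z:ℤ)-l) (by omega)]; simp
  rw [Finset.sum_congr rfl this, ← Finset.mul_sum, s]
  simp only [rq_nat, div_eq_mul_inv, mul_inv]
  ring

lemma reindex (f : ℕ → ℕ → ℕ → ℕ → ℕ → ℕ → ℂ) (X Y Z : ℕ) :
    (∑' t : ℕ × ℕ × ℕ × ℕ × ℕ × ℕ,
      (fun (i j k l m n : ℕ) =>
        if i + l + m = X ∧ j + n = Y + m ∧ j + k + l = Z then f i j k l m n
        else 0) t.1 t.2.1 t.2.2.1 t.2.2.2.1 t.2.2.2.2.1 t.2.2.2.2.2) =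
    ∑ l ∈ range (X+1), (if l ≤ Z then ∑ k ∈ range (Z-l+1), ∑ m ∈ range (X-l+1),
      (if Z-l-k ≤ Y + m then f (X-l-m) (Z-l-k) k l m (Y+m-(Z-l-k)) else 0) else 0) := by
  let g : ℕ × ℕ × ℕ → ℕ × ℕ × ℕ × ℕ × ℕ × ℕ := fun c =>
    (X - c.1 - c.2.2, Z - c.1 - c.2.1, c.2.1, c.1, c.2.2, Y + c.2.2 - (Z - c.1 - c.2.1))
  have hg : Function.Injective g := by
    rintro ⟨l, k, m⟩ ⟨l', k', m'⟩ h
    simp only [g, Prod.mk.injEq] at h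
    obtain ⟨_, _, rfl, rfl, rfl, _⟩ := h
    rfl
  rw [← hg.tsum_eq]
  · rw [tsum_eq_sum (s := range (X+1) ×ˢ range (Z+1) ×ˢ range (X+1))]
    · rw [Finset.sum_product]
      apply Finset.sum_congr rfl
      intro l hl
      have hlX : l ≤ X := by simp at hl; omega
      rw [Finset.sum_product]
      split_ifs with h
      · symm
        rw [← Finset.sum_subset (show range (Z-l+1) ⊆ range (Z+1) from
          Finset.range_mono (by omega))]
        · apply Finset.sum_congr rfl
          intro k hk
          have hk' : k ≤ Z - l := by simp at hk; omega
          rw [← Finset.sum_subset (show range (X-l+1) ⊆ range (X+1) from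
            Finset.range_mono (by omega))]
          · apply Finset.sum_congr rfl
            intro m hm
            have hm' : m ≤ X - l := by simp at hm; omega
            simp only [g]
            congr 1
            simp only [eq_iff_iff]
            omega
          · intro m _ hm
            simp only [mem_range] at hm
            simp only [g]
            rw [if_neg]; omega
        · intro k _ hk
          apply Finset.sum_eq_zero
          intro m _
          simp only [mem_range] at hk
          simp only [g]
          rw [if_neg]; omega
      · apply Finset.sum_eq_zero
        intro k _
        apply Finset.sum_eq_zero
        intro m _
        simp only [g]
        rw [if_neg]; omega
    · rintro ⟨l, k, m⟩ h
      simp only [mem_product, mem_range] at h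
      simp only [g]
      rw [if_neg]; omega
  · rintro ⟨i, j, k, l, m, n⟩ h
    rw [Function.mem_support] at h
    simp only [ne_eq, ite_eq_right_iff, not_forall] at h
    obtain ⟨⟨h1, h2, h3⟩, _⟩ := h
    refine ⟨(l, k, m), ?_⟩
    simp only [g, Prod.mk.injEq]
    refine ⟨by omega, by omega, trivial, trivial, trivial, by omega⟩

theorem ggr_q_analogue_coefficients_second_form (q α β γ : ℂ)
    (hq : q ≠ 0) (hq1 : ∀ i : ℕ, 1 ≤ i → q ^ i ≠ 1)
    (hα : α ≠ 0) (hβ : β ≠ 0) (hγ : γ ≠ 0)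
    (hαβ : ∀ i : ℤ, α * β ≠ q ^ i) (hγq : ∀ i : ℤ, γ ≠ q ^ i)
    (X Y Z : ℕ) :
    qpoch q α (X : ℤ) * qpoch q β (Y : ℤ) * qpoch q (q / γ) (Z : ℤ) *
        qpoch q γ ((X : ℤ) + (Y : ℤ) - (Z : ℤ)) /
        (qpoch q q (X : ℤ) * qpoch q q (Y : ℤ) * qpoch q q (Z : ℤ) *
          qpoch q (α * β) ((X : ℤ) + (Y : ℤ) - (Z : ℤ))) =
    (∑' t : ℕ × ℕ × ℕ × ℕ × ℕ × ℕ,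
      (fun (i j k l m n : ℕ) =>
        if i + l + m = X ∧ j + n = Y + m ∧ j + k + l = Z then
          q ^ ((k : ℤ) * n - (i : ℤ) * n + (m : ℤ)) *
            α ^ (k : ℤ) * β ^ ((k : ℤ) - (i : ℤ) - (m : ℤ)) * γ ^ (-(k : ℤ)) *
            (qpoch q β (n : ℤ) * qpoch q γ (n : ℤ) * qpoch q (γ * q ^ (n : ℤ)) (i : ℤ) *
              qpoch q (β * q ^ (n : ℤ)) (j : ℤ) *
              qpoch q (q ^ (1 - (n : ℤ)) / (α * β)) (k : ℤ) *
              qpoch q (α / γ) (l : ℤ) *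
              qpoch q (q ^ (-(n : ℤ))) (m : ℤ)) /
            (qpoch q (α * β) (n : ℤ) * qpoch q q (n : ℤ) * qpoch q q (i : ℤ) *
              qpoch q q (j : ℤ) * qpoch q q (k : ℤ) * qpoch q q (l : ℤ) *
              qpoch q q (m : ℤ))
        else 0) t.1 t.2.1 t.2.2.1 t.2.2.2.1 t.2.2.2.2.1 t.2.2.2.2.2) := by
  have h := reindex (TT q α β γ) X Y Z
  rw [total_sum q α β γ hq1 hq hα hβ hγ hαβ hγq X Y Z] at h
  simp only [qpoch_nat q _ X, qpoch_nat q _ Y, qpoch_nat q _ Z]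
  exact h.symm
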